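/- Let (Ω₁, μ₁) and (Ω₂, μ₂) be probability spaces, let f : Ω₁ → ℝ and g : Ω₁ × Ω₂ → ℝ be measurable, and let b₀, β, Δ_b, Δ_r ∈ ℝ and δ₁, δ₂ ∈ (0,1) satisfy Δ_b ≥ 0, Δ_r ≥ 0, Δ_b + Δ_r < β, and b₀ ≥ β. Assume: (i) μ₁{ ω₁ : f(ω₁) ≥ b₀ − Δ_b } ≥ 1 − δ₁, and (ii) for every ω₁ ∈ Ω₁, μ₂{ ω₂ : g(ω₁, ω₂) ≥ f(ω₁) − Δ_r } ≥ 1 − δ₂. Set α = 1 − (Δ_b + Δ_r)/β and δ_f = 1 − (1−δ₁)(1−δ₂). Then under the product measure μ₁ ⊗ μ₂, the event { (ω₁,ω₂) : g(ω₁,ω₂) ≥ α·b₀ } has probability at least 1 − δ_f. -/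

import Mathlib

/-!
Where `f ≥ b₀ - Δb`, the section of `{α * b₀ ≤ g}` at `ω₁` contains `{ω₂ | f ω₁ - Δr ≤ g (ω₁, ω₂)}`,
because `α * b₀ = b₀ - (Δb + Δr) * (b₀ / β) ≤ b₀ - Δb - Δr`. So its `μ₂`-measure is at least `1 - δ₂`
on a set of `μ₁`-measure at least `1 - δ₁`, and Tonelli's theorem (`Measure.prod_apply`) gives the
product bound.
-/

open MeasureTheory

/-- composite PCBF bound. If the Bayesian-update barrier `f` satisfies
`f ≥ b₀ − Δ_b` with probability `≥ 1 − δ₁` and the post-resampling barrier `g`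
satisfies `g ≥ f − Δ_r` with conditional probability `≥ 1 − δ₂`, then under the
product measure `g ≥ α·b₀` with probability `≥ 1 − δ_f`, where
`α = 1 − (Δ_b+Δ_r)/β` and `δ_f = 1 − (1−δ₁)(1−δ₂)`. -/
theorem composite_pcbf {Ω₁ Ω₂ : Type*} [MeasurableSpace Ω₁] [MeasurableSpace Ω₂]
    (μ₁ : Measure Ω₁) (μ₂ : Measure Ω₂)
    [IsProbabilityMeasure μ₁] [IsProbabilityMeasure μ₂]
    (f : Ω₁ → ℝ) (g : Ω₁ × Ω₂ → ℝ) (hf : Measurable f) (hg : Measurable g)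
    (b₀ β Δb Δr δ₁ δ₂ : ℝ)
    (hδ₁ : δ₁ ∈ Set.Ioo (0:ℝ) 1) (hδ₂ : δ₂ ∈ Set.Ioo (0:ℝ) 1)
    (hΔb : 0 ≤ Δb) (hΔr : 0 ≤ Δr) (hβ : Δb + Δr < β) (hb₀ : β ≤ b₀)
    (h₁ : ENNReal.ofReal (1 - δ₁) ≤ μ₁ {ω₁ | b₀ - Δb ≤ f ω₁})
    (h₂ : ∀ ω₁, ENNReal.ofReal (1 - δ₂) ≤ μ₂ {ω₂ | f ω₁ - Δr ≤ g (ω₁, ω₂)})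
    (α δf : ℝ) (hα : α = 1 - (Δb + Δr) / β) (hδf : δf = 1 - (1 - δ₁) * (1 - δ₂)) :
    ENNReal.ofReal (1 - δf) ≤ (μ₁.prod μ₂) {p | α * b₀ ≤ g p} := by
  have hβ0 : 0 < β := by linarith
  -- Since `b₀ ≥ β > 0`, the multiplicative bound `α * b₀` is weaker than the additive one.
  have key : α * b₀ ≤ b₀ - Δb - Δr := by
    have h1 : 1 ≤ b₀ / β := (one_le_div hβ0).mpr hb₀
    have h2 : α * b₀ = b₀ - (Δb + Δr) * (b₀ / β) := by rw [hα]; ring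
    nlinarith [mul_le_mul_of_nonneg_left h1 (add_nonneg hΔb hΔr)]
  have hA : MeasurableSet {ω₁ | b₀ - Δb ≤ f ω₁} := measurableSet_le measurable_const hf
  have hS : MeasurableSet {p | α * b₀ ≤ g p} := measurableSet_le measurable_const hg
  have h1δ₂ : 0 ≤ 1 - δ₂ := by linarith [hδ₂.2]
  -- Tonelli: integrate the measures of the `ω₁`-sections, over the good event for `f` only.
  calc ENNReal.ofReal (1 - δf)
      = ENNReal.ofReal (1 - δ₂) * ENNReal.ofReal (1 - δ₁) := by
        rw [← ENNReal.ofReal_mul h1δ₂, hδf]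
        congr 1
        ring
    _ ≤ ENNReal.ofReal (1 - δ₂) * μ₁ {ω₁ | b₀ - Δb ≤ f ω₁} := by gcongr
    _ = ∫⁻ _ in {ω₁ | b₀ - Δb ≤ f ω₁}, ENNReal.ofReal (1 - δ₂) ∂μ₁ :=
        (setLIntegral_const _ _).symm
    _ ≤ ∫⁻ ω₁ in {ω₁ | b₀ - Δb ≤ f ω₁}, μ₂ (Prod.mk ω₁ ⁻¹' {p | α * b₀ ≤ g p}) ∂μ₁ := by
        refine setLIntegral_mono' hA fun ω₁ hω₁ => (h₂ ω₁).trans (measure_mono fun ω₂ hω₂ => ?_)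
        simp only [Set.mem_ofPred_eq, Set.mem_preimage] at hω₁ hω₂ ⊢
        linarith
    _ ≤ ∫⁻ ω₁, μ₂ (Prod.mk ω₁ ⁻¹' {p | α * b₀ ≤ g p}) ∂μ₁ := setLIntegral_le_lintegral _ _
    _ = (μ₁.prod μ₂) {p | α * b₀ ≤ g p} := (Measure.prod_apply hS).symm
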